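/- arXiv:2405.10797 — 3 statements merged into one kernel-verified Lean document; each statement's English description precedes it below -/
import Mathlib

section
/- Define g₄ : [0,2] → ℝ by g₄(u) = (2−u)³ − 9(2−u)(1−u)² + 10(1−u)³ for 0 ≤ u ≤ 1 and g₄(u) = (2−u)³ for 1 ≤ u ≤ 2, and let ξ₀ be the unique real number with ∫₀² (3u−2)e^{−(3u−2)ξ₀} g₄(u) du = 0. Let Δ^C = {(u,v,w) ∈ ℝ³ : 0 ≤ v ≤ u/2, 0 ≤ w ≤ 1−u+v, w ≤ 1+2u−5v}. Then 6·∫_{Δ^C} e^{−(3u−2)ξ₀} (1−u+v−w)(1+2u−5v−w) du dv dw < (1/3)·∫₀² e^{−(3u−2)ξ₀} g₄(u) du. -/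
open MeasureTheory intervalIntegral

/-- The volume function `g₄(u) = vol(π*O(1) − u E_S)` on the blow-up of the quintic
Del Pezzo fourfold `M₄` along the non-vertex-type plane `S`. -/
noncomputable def gFour (u : ℝ) : ℝ :=
  if u ≤ 1 then (2 - u) ^ 3 - 9 * (2 - u) * (1 - u) ^ 2 + 10 * (1 - u) ^ 3
  else (2 - u) ^ 3

/-- Region `Δ^C = {(u,v,w) : 0 ≤ v ≤ u/2, 0 ≤ w ≤ 1−u+v, w ≤ 1+2u−5v}` in ℝ³,
with coordinates `(u, v, w)`. -/
def DeltaC : Set (ℝ × ℝ × ℝ) :=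
  {p | 0 ≤ p.2.1 ∧ p.2.1 ≤ p.1 / 2 ∧ 0 ≤ p.2.2 ∧ p.2.2 ≤ 1 - p.1 + p.2.1 ∧
       p.2.2 ≤ 1 + 2 * p.1 - 5 * p.2.1}


noncomputable def hFour (u : ℝ) : ℝ := (2 - u) ^ 4 / 8 - (max 0 (1 - u)) ^ 3 * (2 + u)

theorem gFour_eq' (u : ℝ) : gFour u =
    (2 - u) ^ 3 - 9 * (2 - u) * (max 0 (1 - u)) ^ 2 + 10 * (max 0 (1 - u)) ^ 3 := by
  unfold gFour
  split_ifs with h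
  · rw [max_eq_right (by linarith)]
  · rw [max_eq_left (by linarith)]; ring

theorem gFour_cont : Continuous gFour := by
  have : gFour = fun u => (2 - u) ^ 3 - 9 * (2 - u) * (max 0 (1 - u)) ^ 2
      + 10 * (max 0 (1 - u)) ^ 3 := funext gFour_eq'
  rw [this]; fun_prop

theorem hFour_cont : Continuous hFour := by
  unfold hFour; fun_prop

theorem hFour_le (u : ℝ) (h0 : 0 < u) (h2 : u ≤ 2) : hFour u ≤ 1 / 3 * gFour u := by
  rw [gFour_eq']
  unfold hFour
  rcases le_total u 1 with h | h
  · rw [max_eq_right (by linarith)]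
    have : 0 ≤ u ^ 3 * (4 / 3 - 9 * u / 8) := mul_nonneg (by positivity) (by linarith)
    nlinarith [this]
  · rw [max_eq_left (by linarith)]
    have : 0 ≤ (2 - u) ^ 3 * (1 / 3 - (2 - u) / 8) :=
      mul_nonneg (pow_nonneg (by linarith) 3) (by linarith)
    nlinarith [this]

theorem int_w (a b : ℝ) : ∫ w in (0:ℝ)..a, (a - w) * (b - w) = a ^ 3 / 3 + (b - a) * a ^ 2 / 2 := by
  have hd : ∀ w ∈ Set.uIcc 0 a, HasDerivAt
      (fun w : ℝ => a * b * w - (a + b) * w ^ 2 / 2 + w ^ 3 / 3) ((a - w) * (b - w)) w := by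
    intro w _
    have h1 := (((hasDerivAt_id w).const_mul (a * b)).sub
      ((((hasDerivAt_id w).pow 2).const_mul (a + b)).div_const 2)).add
      (((hasDerivAt_id w).pow 3).div_const 3)
    exact h1.congr_deriv (by simp only [id]; push_cast; ring)
  rw [integral_eq_sub_of_hasDerivAt hd (Continuous.intervalIntegrable (by fun_prop) _ _)]
  ring

theorem int_v (u m : ℝ) : ∫ v in m..(u/2), (2 * (1 - u + v) ^ 3 + (9 * u - 18 * v) * (1 - u + v) ^ 2)
    = (2 - u) ^ 4 / 8 - (-4 * (1 - u + m) ^ 4 + 3 * (2 - u) * (1 - u + m) ^ 3) := by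
  have hd : ∀ v ∈ Set.uIcc m (u/2), HasDerivAt
      (fun v : ℝ => -4 * (1 - u + v) ^ 4 + 3 * (2 - u) * (1 - u + v) ^ 3)
      (2 * (1 - u + v) ^ 3 + (9 * u - 18 * v) * (1 - u + v) ^ 2) v := by
    intro v _
    have h0 := (hasDerivAt_id v).const_add (1 - u)
    have h1 := ((h0.pow 4).const_mul (-4)).add ((h0.pow 3).const_mul (3 * (2 - u)))
    exact h1.congr_deriv (by simp only [id]; push_cast; ring)
  rw [integral_eq_sub_of_hasDerivAt hd (Continuous.intervalIntegrable (by fun_prop) _ _)]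
  ring

theorem DeltaC_closed : IsClosed DeltaC := by
  unfold DeltaC
  simp only [Set.ofPred_and]
  refine IsClosed.inter ?_ (IsClosed.inter ?_ (IsClosed.inter ?_ (IsClosed.inter ?_ ?_))) <;>
  exact isClosed_le (by fun_prop) (by fun_prop)

theorem DeltaC_sub : DeltaC ⊆ Set.Icc (0:ℝ) 2 ×ˢ (Set.Icc (0:ℝ) 1 ×ˢ Set.Icc (0:ℝ) 2) := by
  rintro ⟨u, v, w⟩ ⟨h1, h2, h3, h4, h5⟩
  simp only [Set.mem_prod, Set.mem_Icc] at *
  refine ⟨⟨?_, ?_⟩, ⟨?_, ?_⟩, ?_, ?_⟩ <;> linarith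

theorem DeltaC_compact : IsCompact DeltaC :=
  (isCompact_Icc.prod (isCompact_Icc.prod isCompact_Icc)).of_isClosed_subset DeltaC_closed DeltaC_sub

theorem sec_compact (u : ℝ) : IsCompact {q : ℝ × ℝ | (u, q) ∈ DeltaC} := by
  refine (isCompact_Icc.prod isCompact_Icc : IsCompact
    (Set.Icc (0:ℝ) 1 ×ˢ Set.Icc (0:ℝ) 2)).of_isClosed_subset ?_ ?_
  · exact DeltaC_closed.preimage (by fun_prop)
  · intro q hq
    exact (DeltaC_sub hq).2

theorem lhs_eq (ξ : ℝ) : 6 * (∫ p in DeltaC,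
          Real.exp (-(3 * p.1 - 2) * ξ) *
            ((1 - p.1 + p.2.1 - p.2.2) * (1 + 2 * p.1 - 5 * p.2.1 - p.2.2)))
    = ∫ u in (0:ℝ)..2, Real.exp (-(3 * u - 2) * ξ) * hFour u := by
  set f : ℝ × ℝ × ℝ → ℝ := fun p => Real.exp (-(3 * p.1 - 2) * ξ) *
            ((1 - p.1 + p.2.1 - p.2.2) * (1 + 2 * p.1 - 5 * p.2.1 - p.2.2)) with hf
  have fc : Continuous f := by rw [hf]; fun_prop
  have hint : Integrable (DeltaC.indicator f) :=
    (integrable_indicator_iff DeltaC_closed.measurableSet).2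
      (fc.continuousOn.integrableOn_compact DeltaC_compact)
  rw [← MeasureTheory.integral_indicator DeltaC_closed.measurableSet]
  rw [Measure.volume_eq_prod] at hint ⊢
  rw [integral_prod _ hint, ← MeasureTheory.integral_const_mul, integral_of_le (by norm_num),
    ← integral_Icc_eq_integral_Ioc, ← MeasureTheory.integral_indicator measurableSet_Icc]
  congr 1
  ext u
  have hint2 : Integrable (fun q : ℝ × ℝ => DeltaC.indicator f (u, q)) := by
    have : (fun q : ℝ × ℝ => DeltaC.indicator f (u, q)) =
        ({q : ℝ × ℝ | (u, q) ∈ DeltaC}).indicator (fun q => f (u, q)) := by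
      ext q; rfl
    rw [this]
    refine (integrable_indicator_iff (sec_compact u).isClosed.measurableSet).2
      (ContinuousOn.integrableOn_compact (sec_compact u) ?_)
    exact Continuous.continuousOn (by fun_prop)
  rw [Measure.volume_eq_prod] at hint2 ⊢
  rw [integral_prod _ hint2]
  have key : ∀ v : ℝ, (∫ w, DeltaC.indicator f (u, v, w)) =
      (Set.Icc (max 0 (u - 1)) (u/2)).indicator (fun v => Real.exp (-(3 * u - 2) * ξ) *
        ((1/6) * (2 * (1 - u + v) ^ 3 + (9 * u - 18 * v) * (1 - u + v) ^ 2))) v := by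
    intro v
    by_cases hv : v ∈ Set.Icc (max 0 (u - 1)) (u/2)
    · rw [Set.indicator_of_mem hv]
      obtain ⟨h1, h2⟩ := hv
      have h0 := (le_max_left _ _).trans h1
      have h3 := (le_max_right _ _).trans h1
      have : (fun w => DeltaC.indicator f (u, v, w)) =
          (Set.Icc 0 (1 - u + v)).indicator (fun w => f (u, v, w)) := by
        ext w
        have : (u, v, w) ∈ DeltaC ↔ w ∈ Set.Icc 0 (1 - u + v) := by
          simp only [DeltaC, Set.mem_setOf_eq, Set.mem_Icc]
          constructor
          · rintro ⟨_, _, a, b, _⟩; exact ⟨a, b⟩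
          · rintro ⟨a, b⟩; exact ⟨h0, h2, a, b, by linarith⟩
        simp only [Set.indicator, this]
      rw [this, MeasureTheory.integral_indicator measurableSet_Icc, integral_Icc_eq_integral_Ioc,
        ← integral_of_le (by linarith)]
      simp only [hf]
      rw [intervalIntegral.integral_const_mul, int_w]
      ring
    · rw [Set.indicator_of_notMem hv]
      have : (fun w => DeltaC.indicator f (u, v, w)) = fun _ => 0 := by
        ext w
        apply Set.indicator_of_notMem
        rintro ⟨h1, h2, h3, h4, h5⟩
        simp only at h1 h2 h3 h4 h5
        exact hv ⟨max_le h1 (by linarith), h2⟩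
      rw [this]; simp
  simp only [key]
  rw [MeasureTheory.integral_indicator measurableSet_Icc]
  by_cases hu : u ∈ Set.Icc (0:ℝ) 2
  · rw [Set.indicator_of_mem hu, integral_Icc_eq_integral_Ioc,
      ← integral_of_le (max_le (by linarith [hu.1]) (by linarith [hu.2])),
      intervalIntegral.integral_const_mul, intervalIntegral.integral_const_mul, int_v]
    unfold hFour
    rcases le_total u 1 with h | h
    · rw [max_eq_left (by linarith), max_eq_right (by linarith)]; ring
    · rw [max_eq_right (by linarith), max_eq_left (by linarith)]; ring
  · rw [Set.indicator_of_notMem hu, Set.Icc_eq_empty]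
    · simp
    · intro h
      have h0 := (le_max_left _ _).trans h
      have h3 := (le_max_right _ _).trans h
      exact hu ⟨by linarith, by linarith⟩

/-- The weighted estimate `S^g(W^F_{•••}; C) < 1/3 · A_F(C)` for the soliton
candidate `ξ₀` of `M₄` (the root of the displayed constraint). -/
theorem Sg_WF_C_lt (ξ₀ : ℝ)
    (hξ : (∫ u in (0:ℝ)..2, (3 * u - 2) * Real.exp (-(3 * u - 2) * ξ₀) * gFour u) = 0) :
    6 * (∫ p in DeltaC,
          Real.exp (-(3 * p.1 - 2) * ξ₀) *
            ((1 - p.1 + p.2.1 - p.2.2) * (1 + 2 * p.1 - 5 * p.2.1 - p.2.2)))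
      < 1 / 3 * ∫ u in (0:ℝ)..2, Real.exp (-(3 * u - 2) * ξ₀) * gFour u := by
  rw [lhs_eq, ← intervalIntegral.integral_const_mul]
  have hg := gFour_cont
  have hh := hFour_cont
  apply integral_lt_integral_of_continuousOn_of_le_of_exists_lt (by norm_num)
  · exact Continuous.continuousOn (by fun_prop)
  · exact Continuous.continuousOn (by fun_prop)
  · intro u hu
    have := mul_le_mul_of_nonneg_left (hFour_le u hu.1 hu.2)
      (Real.exp_pos (-(3 * u - 2) * ξ₀)).le
    linarith
  · refine ⟨1, by norm_num, ?_⟩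
    have h1 : hFour 1 < 1 / 3 * gFour 1 := by
      norm_num [hFour, gFour]
    have := mul_lt_mul_of_pos_left h1 (Real.exp_pos (-(3 * 1 - 2) * ξ₀))
    linarith
end

section
/- Let g₅(t) = 4t − 4t³ on [0,1] and let η₀ be the unique real number with ∫₀¹ (4t−2)e^{−(4t−2)η₀} g₅(t) dt = 0. With the regions Δ_A = {(t,s,r) : 0<t<1, 0<s<1, ((s<t and r>0) or (s>t and r>s−t)), ((s+t<1 and r<s) or (s+t>1 and r<1−t))}, Δ_B = {(t,s,r) : 0<t<1, −1+t+s−2r>0, ((0<s<1 and s+t>1 and r>1−t) or (1<s<1+t and r>s−t))}, Δ_{C1} = {0<t<1, t<s<1, 0<r<s−t}, Δ_{C2} = {0<t<1, 1<s<1+t, 0<r<s−t}, and integrands f_A = 6r(1−t−r)(s−r) + 3(1−t)(s−r)², f_B = 3(1−t)(1−t+s−2r)², f_{C1} = 6(s−t)(1−s)t + 3(1−t)t², f_{C2} = 3(1−t)(1+t−s)², one has 4·(∫_{Δ_A} e^{−(4t−2)η₀} f_A + ∫_{Δ_B} e^{−(4t−2)η₀} f_B + ∫_{Δ_{C1}}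 e^{−(4t−2)η₀} f_{C1} + ∫_{Δ_{C2}} e^{−(4t−2)η₀} f_{C2}) < (1/2)·∫₀¹ e^{−(4t−2)η₀} g₅(t) dt. -/
open MeasureTheory intervalIntegral

/-- The volume function `g₅(t) = 4t − 4t³`. -/
noncomputable def gFive (t : ℝ) : ℝ := 4 * t - 4 * t ^ 3

/-- Region `Δ_A` in ℝ³, coordinates `(t, s, r)`. -/
def DeltaA : Set (ℝ × ℝ × ℝ) :=
  {p | 0 < p.1 ∧ p.1 < 1 ∧ 0 < p.2.1 ∧ p.2.1 < 1 ∧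
       ((p.2.1 < p.1 ∧ p.2.2 > 0) ∨ (p.2.1 > p.1 ∧ p.2.2 > p.2.1 - p.1)) ∧
       ((p.2.1 + p.1 < 1 ∧ p.2.2 < p.2.1) ∨ (p.2.1 + p.1 > 1 ∧ p.2.2 < 1 - p.1))}

/-- Region `Δ_B` in ℝ³, coordinates `(t, s, r)`. -/
def DeltaB : Set (ℝ × ℝ × ℝ) :=
  {p | 0 < p.1 ∧ p.1 < 1 ∧ -1 + p.1 + p.2.1 - 2 * p.2.2 > 0 ∧
       ((0 < p.2.1 ∧ p.2.1 < 1 ∧ p.2.1 + p.1 > 1 ∧ p.2.2 > 1 - p.1) ∨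
        (1 < p.2.1 ∧ p.2.1 < 1 + p.1 ∧ p.2.2 > p.2.1 - p.1))}

/-- Region `Δ_{C1}` in ℝ³, coordinates `(t, s, r)`. -/
def DeltaC1 : Set (ℝ × ℝ × ℝ) :=
  {p | 0 < p.1 ∧ p.1 < 1 ∧ p.1 < p.2.1 ∧ p.2.1 < 1 ∧ 0 < p.2.2 ∧ p.2.2 < p.2.1 - p.1}

/-- Region `Δ_{C2}` in ℝ³, coordinates `(t, s, r)`. -/
def DeltaC2 : Set (ℝ × ℝ × ℝ) :=
  {p | 0 < p.1 ∧ p.1 < 1 ∧ 1 < p.2.1 ∧ p.2.1 < 1 + p.1 ∧ 0 < p.2.2 ∧ p.2.2 < p.2.1 - p.1}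

lemma int4 (c0 c1 c2 c3 c4 a b : ℝ) : (∫ x in a..b, (c0 + c1*x + c2*x^2 + c3*x^3 + c4*x^4)) =
    (c0*b + c1*b^2/2 + c2*b^3/3 + c3*b^4/4 + c4*b^5/5) - (c0*a + c1*a^2/2 + c2*a^3/3 + c3*a^4/4 + c4*a^5/5) := by
  have hd : ∀ x ∈ Set.uIcc a b, HasDerivAt (fun b : ℝ => c0*b + c1*b^2/2 + c2*b^3/3 + c3*b^4/4 + c4*b^5/5)
      (c0 + c1*x + c2*x^2 + c3*x^3 + c4*x^4) x := by
    intro x _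
    have h1 := (hasDerivAt_id x).const_mul c0
    have h2 := ((hasDerivAt_pow 2 x).const_mul c1).div_const 2
    have h3 := ((hasDerivAt_pow 3 x).const_mul c2).div_const 3
    have h4 := ((hasDerivAt_pow 4 x).const_mul c3).div_const 4
    have h5 := ((hasDerivAt_pow 5 x).const_mul c4).div_const 5
    refine ((((h1.add h2).add h3).add h4).add h5).congr_deriv ?_
    norm_num
    ring
  rw [intervalIntegral.integral_eq_sub_of_hasDerivAt hd]
  exact Continuous.intervalIntegrable (by fun_prop) _ _

lemma int4' {f : ℝ → ℝ} (c0 c1 c2 c3 c4 a b : ℝ) (h : ∀ x, f x = c0 + c1*x + c2*x^2 + c3*x^3 + c4*x^4) :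
    (∫ x in a..b, f x) =
    (c0*b + c1*b^2/2 + c2*b^3/3 + c3*b^4/4 + c4*b^5/5) - (c0*a + c1*a^2/2 + c2*a^3/3 + c3*a^4/4 + c4*a^5/5) := by
  rw [← int4]
  exact intervalIntegral.integral_congr (fun x _ => h x)

/-- one `s`-piece: known polynomial on the open interval -/
lemma piece {f : ℝ → ℝ} (c0 c1 c2 c3 c4 a b : ℝ) (hab : a ≤ b)
    (h : ∀ x, a < x → x < b → f x = c0 + c1*x + c2*x^2 + c3*x^3 + c4*x^4) :
    IntervalIntegrable f volume a b ∧ (∫ x in a..b, f x) =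
    (c0*b + c1*b^2/2 + c2*b^3/3 + c3*b^4/4 + c4*b^5/5) - (c0*a + c1*a^2/2 + c2*a^3/3 + c3*a^4/4 + c4*a^5/5) := by
  have hae : ∀ᵐ x ∂volume, x ∈ Set.uIoc a b → c0 + c1*x + c2*x^2 + c3*x^3 + c4*x^4 = f x := by
    have : ∀ᵐ x ∂(volume : Measure ℝ), x ≠ b := by simp [ae_iff]
    filter_upwards [this] with x hx hxm
    rw [Set.uIoc_of_le hab] at hxm
    exact (h x hxm.1 (lt_of_le_of_ne hxm.2 hx)).symm
  constructor
  · refine IntervalIntegrable.congr_ae (f := fun x => c0 + c1*x + c2*x^2 + c3*x^3 + c4*x^4) (Continuous.intervalIntegrable (by fun_prop) _ _) ?_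
    exact (ae_restrict_iff' measurableSet_uIoc).2 hae
  · rw [← int4]
    exact (intervalIntegral.integral_congr_ae hae).symm

lemma slice (S : Set (ℝ × ℝ × ℝ)) (k : ℝ × ℝ × ℝ → ℝ) (t s lo hi : ℝ) (hl : lo ≤ hi)
    (h : ∀ r, (t, s, r) ∈ S ↔ lo < r ∧ r < hi) :
    (∫ r, S.indicator k (t, s, r)) = ∫ r in lo..hi, k (t, s, r) := by
  rw [intervalIntegral.integral_of_le hl, integral_Ioc_eq_integral_Ioo, ← MeasureTheory.integral_indicator measurableSet_Ioo]
  congr 1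
  ext r
  by_cases hr : (t, s, r) ∈ S
  · rw [Set.indicator_of_mem hr, Set.indicator_of_mem (Set.mem_Ioo.2 ((h r).1 hr))]
  · rw [Set.indicator_of_notMem hr, Set.indicator_of_notMem (fun hh => hr ((h r).2 (Set.mem_Ioo.1 hh)))]

lemma slice0 (S : Set (ℝ × ℝ × ℝ)) (k : ℝ × ℝ × ℝ → ℝ) (t s : ℝ)
    (h : ∀ r, (t, s, r) ∉ S) : (∫ r, S.indicator k (t, s, r)) = 0 := by
  simp [Set.indicator_of_notMem, h]

lemma supp {f : ℝ → ℝ} (a b : ℝ) (h : ∀ x, x ≤ a ∨ b < x → f x = 0) :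
    ∫ x, f x = ∫ x in a..b, f x := by
  rw [intervalIntegral.integral_eq_integral_of_support_subset]
  intro x hx
  by_contra hc
  apply hx
  apply h
  simp only [Set.mem_Ioc, not_and_or, not_lt, not_le] at hc
  exact hc

lemma key (S : Set (ℝ × ℝ × ℝ)) (hm : MeasurableSet S)
    (hb : S ⊆ Set.Icc 0 1 ×ˢ Set.Icc 0 2 ×ˢ Set.Icc 0 2) (w : ℝ → ℝ) (hw : Continuous w)
    (k : ℝ × ℝ × ℝ → ℝ) (hk : Continuous k) (K : ℝ → ℝ)
    (hK : ∀ t, 0 < t → t < 1 → t ≠ 1/2 → ∫ s, ∫ r, S.indicator k (t, s, r) = K t) :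
    IntervalIntegrable (fun t => w t * K t) volume 0 1 ∧
    (∫ p in S, w p.1 * k p) = ∫ t in (0:ℝ)..1, w t * K t := by
  have hcont : Continuous (fun p : ℝ × ℝ × ℝ => w p.1 * k p) := by fun_prop
  have hI : IntegrableOn (fun p : ℝ × ℝ × ℝ => w p.1 * k p) S volume :=
    (hcont.continuousOn.integrableOn_compact
      (isCompact_Icc.prod (isCompact_Icc.prod isCompact_Icc))).mono_set hb
  have hI' : Integrable (S.indicator (fun p : ℝ × ℝ × ℝ => w p.1 * k p)) volume :=
    (integrable_indicator_iff hm).2 hI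
  have hI1 : Integrable (S.indicator (fun p : ℝ × ℝ × ℝ => w p.1 * k p))
    ((volume : Measure ℝ).prod (volume : Measure (ℝ × ℝ))) := hI'
  have hin := hI1.integral_prod_left
  have hae : ∀ᵐ t ∂(volume : Measure ℝ), t ∈ Set.uIoc 0 1 →
      (∫ q, S.indicator (fun p : ℝ × ℝ × ℝ => w p.1 * k p) (t, q)) = w t * K t := by
    have n1 : ∀ᵐ x ∂(volume : Measure ℝ), x ≠ 1 := by simp [ae_iff]
    have n2 : ∀ᵐ x ∂(volume : Measure ℝ), x ≠ 1/2 := by simp [ae_iff]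
    filter_upwards [n1, n2, hI1.prod_right_ae] with t h1 h2 h3 ht
    rw [Set.uIoc_of_le zero_le_one] at ht
    have h4 : Integrable (fun q : ℝ × ℝ => S.indicator (fun p : ℝ × ℝ × ℝ => w p.1 * k p) (t, q))
      ((volume : Measure ℝ).prod (volume : Measure ℝ)) := h3
    rw [← hK t ht.1 (lt_of_le_of_ne ht.2 h1) h2, Measure.volume_eq_prod, integral_prod _ h4,
      ← MeasureTheory.integral_const_mul]
    congr 1
    ext s
    rw [← MeasureTheory.integral_const_mul]
    congr 1
    ext r
    by_cases hr : (t, s, r) ∈ S <;> simp [hr]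
  have heq : (∫ p in S, w p.1 * k p) = ∫ t in (0:ℝ)..1, 
      (∫ q, S.indicator (fun p : ℝ × ℝ × ℝ => w p.1 * k p) (t, q)) := by
    rw [← MeasureTheory.integral_indicator hm, Measure.volume_eq_prod, integral_prod _ hI1]
    have z : ∀ t : ℝ, (t < 0 ∨ 1 < t) → (∫ q, S.indicator (fun p : ℝ × ℝ × ℝ => w p.1 * k p) (t, q)) = 0 := by
      intro t ht
      have : ∀ q : ℝ × ℝ, (t, q) ∉ S := fun q hq => by
        have := (hb hq).1
        simp only [Set.mem_Icc] at this
        rcases ht with h | h <;> linarith [this.1, this.2]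
      simp [Set.indicator_of_notMem, this]
    rw [intervalIntegral.integral_of_le zero_le_one, ← integral_Icc_eq_integral_Ioc]
    refine (setIntegral_eq_integral_of_forall_compl_eq_zero ?_).symm
    intro t ht
    apply z
    simp only [Set.mem_Icc, not_and_or, not_le] at ht
    exact ht
  refine ⟨?_, ?_⟩
  · exact (hin.intervalIntegrable).congr_ae ((ae_restrict_iff' measurableSet_uIoc).2 hae)
  · rw [heq]
    exact intervalIntegral.integral_congr_ae hae
noncomputable def kA (p : ℝ × ℝ × ℝ) : ℝ := 6 * p.2.2 * (1 - p.1 - p.2.2) * (p.2.1 - p.2.2) + 3 * (1 - p.1) * (p.2.1 - p.2.2) ^ 2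

noncomputable def kB (p : ℝ × ℝ × ℝ) : ℝ := 3 * (1 - p.1) * (1 - p.1 + p.2.1 - 2 * p.2.2) ^ 2

noncomputable def kC1 (p : ℝ × ℝ × ℝ) : ℝ := 6 * (p.2.1 - p.1) * (1 - p.2.1) * p.1 + 3 * (1 - p.1) * p.1 ^ 2

noncomputable def kC2 (p : ℝ × ℝ × ℝ) : ℝ := 3 * (1 - p.1) * (1 + p.1 - p.2.1) ^ 2

lemma slA1 (t : ℝ) (h0 : 0 < t) (h1 : t < 1) (h2 : t < 1/2) :
    ∫ s, ∫ r, DeltaA.indicator kA (t, s, r) = t^2/2 - t^3/2 - t^4/2 + t^5/2 := by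
  have p0 := piece (f := fun s => ∫ r, DeltaA.indicator kA (t, s, r))
    (0) (0) (0) ((2) + (-2) * t^1) ((-1/2))
    (0) (t) (by linarith) (by
      intro x hx1 hx2
      beta_reduce
      rw [slice DeltaA kA t x (0) (x) (by linarith) (by
          intro r
          simp only [DeltaA, Set.mem_ofPred_eq]
          grind),
        int4' ((3) * x^2 + (-3) * t^1 * x^2) (0) ((-3) + (-6) * x^1 + (3) * t^1) ((6)) (0) _ _ (by intro r; simp only [kA]; ring)]
      ring)
  have p1 := piece (f := fun s => ∫ r, DeltaA.indicator kA (t, s, r))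
    ((-1) * t^3 + (-1/2) * t^4) ((3) * t^2 + (1) * t^3) ((-3) * t^2) (0) (0)
    (t) (1-t) (by linarith) (by
      intro x hx1 hx2
      beta_reduce
      rw [slice DeltaA kA t x (x-t) (x) (by linarith) (by
          intro r
          simp only [DeltaA, Set.mem_ofPred_eq]
          grind),
        int4' ((3) * x^2 + (-3) * t^1 * x^2) (0) ((-3) + (-6) * x^1 + (3) * t^1) ((6)) (0) _ _ (by intro r; simp only [kA]; ring)]
      ring)
  have p2 := piece (f := fun s => ∫ r, DeltaA.indicator kA (t, s, r))
    ((1/2) + (-2) * t^1 + (3) * t^2 + (-3) * t^3) ((-2) + (6) * t^1 + (-3) * t^2 + (3) * t^3) ((3) + (-6) * t^1) ((-2) + (2) * t^1) ((1/2))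
    (1-t) (1) (by linarith) (by
      intro x hx1 hx2
      beta_reduce
      rw [slice DeltaA kA t x (x-t) (1-t) (by linarith) (by
          intro r
          simp only [DeltaA, Set.mem_ofPred_eq]
          grind),
        int4' ((3) * x^2 + (-3) * t^1 * x^2) (0) ((-3) + (-6) * x^1 + (3) * t^1) ((6)) (0) _ _ (by intro r; simp only [kA]; ring)]
      ring)
  rw [supp (0) (1) (by
    intro x hx
    apply slice0
    intro r
    simp only [DeltaA, Set.mem_ofPred_eq]
    grind)]
  rw [← integral_add_adjacent_intervals p0.1 (p1.1.trans p2.1)]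
  rw [← integral_add_adjacent_intervals p1.1 p2.1]
  rw [p0.2, p1.2, p2.2]
  ring

lemma slA2 (t : ℝ) (h0 : 0 < t) (h1 : t < 1) (h2 : 1/2 < t) :
    ∫ s, ∫ r, DeltaA.indicator kA (t, s, r) = t^2/2 - t^3/2 - t^4/2 + t^5/2 := by
  have p0 := piece (f := fun s => ∫ r, DeltaA.indicator kA (t, s, r))
    (0) (0) (0) ((2) + (-2) * t^1) ((-1/2))
    (0) (1-t) (by linarith) (by
      intro x hx1 hx2
      beta_reduce
      rw [slice DeltaA kA t x (0) (x) (by linarith) (by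
          intro r
          simp only [DeltaA, Set.mem_ofPred_eq]
          grind),
        int4' ((3) * x^2 + (-3) * t^1 * x^2) (0) ((-3) + (-6) * x^1 + (3) * t^1) ((6)) (0) _ _ (by intro r; simp only [kA]; ring)]
      ring)
  have p1 := piece (f := fun s => ∫ r, DeltaA.indicator kA (t, s, r))
    ((1/2) + (-2) * t^1 + (3) * t^2 + (-2) * t^3 + (1/2) * t^4) ((-2) + (6) * t^1 + (-6) * t^2 + (2) * t^3) ((3) + (-6) * t^1 + (3) * t^2) (0) (0)
    (1-t) (t) (by linarith) (by
      intro x hx1 hx2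
      beta_reduce
      rw [slice DeltaA kA t x (0) (1-t) (by linarith) (by
          intro r
          simp only [DeltaA, Set.mem_ofPred_eq]
          grind),
        int4' ((3) * x^2 + (-3) * t^1 * x^2) (0) ((-3) + (-6) * x^1 + (3) * t^1) ((6)) (0) _ _ (by intro r; simp only [kA]; ring)]
      ring)
  have p2 := piece (f := fun s => ∫ r, DeltaA.indicator kA (t, s, r))
    ((1/2) + (-2) * t^1 + (3) * t^2 + (-3) * t^3) ((-2) + (6) * t^1 + (-3) * t^2 + (3) * t^3) ((3) + (-6) * t^1) ((-2) + (2) * t^1) ((1/2))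
    (t) (1) (by linarith) (by
      intro x hx1 hx2
      beta_reduce
      rw [slice DeltaA kA t x (x-t) (1-t) (by linarith) (by
          intro r
          simp only [DeltaA, Set.mem_ofPred_eq]
          grind),
        int4' ((3) * x^2 + (-3) * t^1 * x^2) (0) ((-3) + (-6) * x^1 + (3) * t^1) ((6)) (0) _ _ (by intro r; simp only [kA]; ring)]
      ring)
  rw [supp (0) (1) (by
    intro x hx
    apply slice0
    intro r
    simp only [DeltaA, Set.mem_ofPred_eq]
    grind)]
  rw [← integral_add_adjacent_intervals p0.1 (p1.1.trans p2.1)]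
  rw [← integral_add_adjacent_intervals p1.1 p2.1]
  rw [p0.2, p1.2, p2.2]
  ring

lemma slB (t : ℝ) (h0 : 0 < t) (h1 : t < 1) (h2 : 2/3 < t) :
    ∫ s, ∫ r, DeltaB.indicator kB (t, s, r) = (1-t)*(3*t-2)^2*(3-5*t+9/4*t^2) := by
  have p0 := piece (f := fun s => ∫ r, DeltaB.indicator kB (t, s, r))
    ((-9/2) + (18) * t^1 + (-27) * t^2 + (18) * t^3 + (-9/2) * t^4) ((3/2) + (-9/2) * t^1 + (9/2) * t^2 + (-3/2) * t^3) ((-3/2) + (3) * t^1 + (-3/2) * t^2) ((1/2) + (-1/2) * t^1) (0)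
    (3-3*t) (1) (by linarith) (by
      intro x hx1 hx2
      beta_reduce
      rw [slice DeltaB kB t x (1-t) ((t+x-1)/2) (by linarith) (by
          intro r
          simp only [DeltaB, Set.mem_ofPred_eq]
          grind),
        int4' ((3) + (6) * x^1 + (3) * x^2 + (-9) * t^1 + (-12) * t^1 * x^1 + (-3) * t^1 * x^2 + (9) * t^2 + (6) * t^2 * x^1 + (-3) * t^3) ((-12) + (-12) * x^1 + (24) * t^1 + (12) * t^1 * x^1 + (-12) * t^2) ((12) + (-12) * t^1) (0) (0) _ _ (by intro r; simp only [kB]; ring)]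
      ring)
  have p1 := piece (f := fun s => ∫ r, DeltaB.indicator kB (t, s, r))
    ((-7/2) + (17) * t^1 + (-24) * t^2 + (15) * t^3 + (-9/2) * t^4) ((-3/2) + (-3/2) * t^1 + (3/2) * t^2 + (3/2) * t^3) ((3/2) + (-3/2) * t^2) ((-1/2) + (1/2) * t^1) (0)
    (1) (3*t-1) (by linarith) (by
      intro x hx1 hx2
      beta_reduce
      rw [slice DeltaB kB t x (x-t) ((t+x-1)/2) (by linarith) (by
          intro r
          simp only [DeltaB, Set.mem_ofPred_eq]
          grind),
        int4' ((3) + (6) * x^1 + (3) * x^2 + (-9) * t^1 + (-12) * t^1 * x^1 + (-3) * t^1 * x^2 + (9) * t^2 + (6) * t^2 * x^1 + (-3) * t^3) ((-12) + (-12) * x^1 + (24) * t^1 + (12) * t^1 * x^1 + (-12) * t^2) ((12) + (-12) * t^1) (0) (0) _ _ (by intro r; simp only [kB]; ring)]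
      ring)
  rw [supp (3-3*t) (3*t-1) (by
    intro x hx
    apply slice0
    intro r
    simp only [DeltaB, Set.mem_ofPred_eq]
    grind)]
  rw [← integral_add_adjacent_intervals p0.1 p1.1]
  rw [p0.2, p1.2]
  ring

lemma slC1 (t : ℝ) (h0 : 0 < t) (h1 : t < 1) :
    ∫ s, ∫ r, DeltaC1.indicator kC1 (t, s, r) = t/2 - t^2/2 - 3/2*t^3 + 5/2*t^4 - t^5 := by
  have p0 := piece (f := fun s => ∫ r, DeltaC1.indicator kC1 (t, s, r))
    ((3) * t^3 + (3) * t^4) ((-9) * t^2 + (-9) * t^3) ((6) * t^1 + (12) * t^2) ((-6) * t^1) (0)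
    (t) (1) (by linarith) (by
      intro x hx1 hx2
      beta_reduce
      rw [slice DeltaC1 kC1 t x (0) (x-t) (by linarith) (by
          intro r
          simp only [DeltaC1, Set.mem_ofPred_eq]
          grind),
        int4' ((6) * t^1 * x^1 + (-6) * t^1 * x^2 + (-3) * t^2 + (6) * t^2 * x^1 + (-3) * t^3) (0) (0) (0) (0) _ _ (by intro r; simp only [kC1]; ring)]
      ring)
  rw [supp (t) (1) (by
    intro x hx
    apply slice0
    intro r
    simp only [DeltaC1, Set.mem_ofPred_eq]
    grind)]
  rw [p0.2]
  ring

lemma slC2 (t : ℝ) (h0 : 0 < t) (h1 : t < 1) :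
    ∫ s, ∫ r, DeltaC2.indicator kC2 (t, s, r) = t^3 - 7/4*t^4 + 3/4*t^5 := by
  have p0 := piece (f := fun s => ∫ r, DeltaC2.indicator kC2 (t, s, r))
    ((-3) * t^1 + (-3) * t^2 + (3) * t^3 + (3) * t^4) ((3) + (9) * t^1 + (-3) * t^2 + (-9) * t^3) ((-6) + (-3) * t^1 + (9) * t^2) ((3) + (-3) * t^1) (0)
    (1) (1+t) (by linarith) (by
      intro x hx1 hx2
      beta_reduce
      rw [slice DeltaC2 kC2 t x (0) (x-t) (by linarith) (by
          intro r
          simp only [DeltaC2, Set.mem_ofPred_eq]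
          grind),
        int4' ((3) + (-6) * x^1 + (3) * x^2 + (3) * t^1 + (-3) * t^1 * x^2 + (-3) * t^2 + (6) * t^2 * x^1 + (-3) * t^3) (0) (0) (0) (0) _ _ (by intro r; simp only [kC2]; ring)]
      ring)
  rw [supp (1) (1+t) (by
    intro x hx
    apply slice0
    intro r
    simp only [DeltaC2, Set.mem_ofPred_eq]
    grind)]
  rw [p0.2]
  ring

lemma slB0 (t : ℝ) (h0 : 0 < t) (h1 : t < 1) (h2 : t ≤ 2/3) :
    ∫ s, ∫ r, DeltaB.indicator kB (t, s, r) = 0 := by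
  have : ∀ s, ∫ r, DeltaB.indicator kB (t, s, r) = 0 := by
    intro s
    apply slice0
    intro r
    simp only [DeltaB, Set.mem_ofPred_eq]
    grind
  simp [this]

lemma openA : IsOpen DeltaA := by
  unfold DeltaA
  simp only [Set.ofPred_and, Set.ofPred_or, gt_iff_lt]
  repeat' first | apply IsOpen.inter | apply IsOpen.union | (apply isOpen_lt <;> fun_prop)

lemma openB : IsOpen DeltaB := by
  unfold DeltaB
  simp only [Set.ofPred_and, Set.ofPred_or, gt_iff_lt]
  repeat' first | apply IsOpen.inter | apply IsOpen.union | (apply isOpen_lt <;> fun_prop)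

lemma openC1 : IsOpen DeltaC1 := by
  unfold DeltaC1
  simp only [Set.ofPred_and, Set.ofPred_or, gt_iff_lt]
  repeat' first | apply IsOpen.inter | apply IsOpen.union | (apply isOpen_lt <;> fun_prop)

lemma openC2 : IsOpen DeltaC2 := by
  unfold DeltaC2
  simp only [Set.ofPred_and, Set.ofPred_or, gt_iff_lt]
  repeat' first | apply IsOpen.inter | apply IsOpen.union | (apply isOpen_lt <;> fun_prop)

lemma final_ineq (t : ℝ) (h0 : 2/3 < t) (h1 : t < 1) :
    0 < t^3*(2+t) - (3*t-2)^2*(12-20*t+9*t^2) := by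
  obtain ⟨x, rfl⟩ : ∃ x, t = (x+2)/3 := ⟨3*t-2, by ring⟩
  have a : 0 < x := by linarith
  have b : x < 1 := by linarith
  nlinarith [mul_pos a (sub_pos.2 b), mul_pos a a, mul_pos (mul_pos a a) (sub_pos.2 b), mul_pos (mul_pos a a) (mul_pos a (sub_pos.2 b)), sq_nonneg (x-1/2)]

/-- The weighted estimate `S^g(W^{E_l}_{•••}; E_C) < 1/2` for the soliton candidate `η₀`
of `M₅` (the root of the displayed constraint). -/
theorem Sg_WEl_EC_lt (η₀ : ℝ)
    (hη : (∫ t in (0:ℝ)..1, (4 * t - 2) * Real.exp (-(4 * t - 2) * η₀) * gFive t) = 0) :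
    4 * ((∫ p in DeltaA,
            Real.exp (-(4 * p.1 - 2) * η₀) *
              (6 * p.2.2 * (1 - p.1 - p.2.2) * (p.2.1 - p.2.2) +
                3 * (1 - p.1) * (p.2.1 - p.2.2) ^ 2)) +
         (∫ p in DeltaB,
            Real.exp (-(4 * p.1 - 2) * η₀) *
              (3 * (1 - p.1) * (1 - p.1 + p.2.1 - 2 * p.2.2) ^ 2)) +
         (∫ p in DeltaC1,
            Real.exp (-(4 * p.1 - 2) * η₀) *
              (6 * (p.2.1 - p.1) * (1 - p.2.1) * p.1 + 3 * (1 - p.1) * p.1 ^ 2)) +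
         (∫ p in DeltaC2,
            Real.exp (-(4 * p.1 - 2) * η₀) *
              (3 * (1 - p.1) * (1 + p.1 - p.2.1) ^ 2)))
      < 1 / 2 * ∫ t in (0:ℝ)..1, Real.exp (-(4 * t - 2) * η₀) * gFive t := by
  have hw : Continuous (fun t : ℝ => Real.exp (-(4 * t - 2) * η₀)) := by fun_prop
  obtain ⟨iA, eA⟩ := key DeltaA openA.measurableSet (by
      rintro ⟨t, s, r⟩ h
      simp only [DeltaA, Set.mem_ofPred_eq] at h
      simp only [Set.mem_prod, Set.mem_Icc]
      grind) _ hw kA (by unfold kA; fun_prop) (fun t => t^2/2 - t^3/2 - t^4/2 + t^5/2) (by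
      intro t h0 h1 h2
      rcases lt_or_gt_of_ne h2 with h | h
      · exact slA1 t h0 h1 h
      · exact slA2 t h0 h1 h)
  obtain ⟨iB, eB⟩ := key DeltaB openB.measurableSet (by
      rintro ⟨t, s, r⟩ h
      simp only [DeltaB, Set.mem_ofPred_eq] at h
      simp only [Set.mem_prod, Set.mem_Icc]
      grind) _ hw kB (by unfold kB; fun_prop)
      (fun t => if t ≤ 2/3 then 0 else (1-t)*(3*t-2)^2*(3-5*t+9/4*t^2)) (by
      intro t h0 h1 h2
      by_cases h : t ≤ 2/3
      · simp only [h, if_true]; exact slB0 t h0 h1 h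
      · simp only [h, if_false]; exact slB t h0 h1 (not_le.1 h))
  obtain ⟨iC, eC⟩ := key DeltaC1 openC1.measurableSet (by
      rintro ⟨t, s, r⟩ h
      simp only [DeltaC1, Set.mem_ofPred_eq] at h
      simp only [Set.mem_prod, Set.mem_Icc]
      grind) _ hw kC1 (by unfold kC1; fun_prop) _ (fun t h0 h1 _ => slC1 t h0 h1)
  obtain ⟨iD, eD⟩ := key DeltaC2 openC2.measurableSet (by
      rintro ⟨t, s, r⟩ h
      simp only [DeltaC2, Set.mem_ofPred_eq] at h
      simp only [Set.mem_prod, Set.mem_Icc]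
      grind) _ hw kC2 (by unfold kC2; fun_prop) _ (fun t h0 h1 _ => slC2 t h0 h1)
  have iG : IntervalIntegrable (fun t : ℝ => Real.exp (-(4 * t - 2) * η₀) * gFive t) volume 0 1 :=
    Continuous.intervalIntegrable (by unfold gFive; fun_prop) _ _
  simp only [kA, kB, kC1, kC2] at eA eB eC eD
  rw [eA, eB, eC, eD, ← intervalIntegral.integral_add iA iB,
    ← intervalIntegral.integral_add (iA.add iB) iC,
    ← intervalIntegral.integral_add ((iA.add iB).add iC) iD,
    ← intervalIntegral.integral_const_mul, ← intervalIntegral.integral_const_mul, ← sub_pos,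
    ← intervalIntegral.integral_sub (iG.const_mul _) ((((iA.add iB).add iC).add iD).const_mul _)]
  refine intervalIntegral.intervalIntegral_pos_of_pos_on
    ((iG.const_mul _).sub ((((iA.add iB).add iC).add iD).const_mul _)) ?_ one_pos
  rintro t ⟨h0, h1⟩
  have he := Real.exp_pos (-(4 * t - 2) * η₀)
  have h1' : 0 < 1 - t := by linarith
  simp only [gFive]
  by_cases h : t ≤ 2/3
  · simp only [h, if_true]
    have : 0 < Real.exp (-(4 * t - 2) * η₀) * (t^3 * (1-t) * (2+t)) := by positivity
    refine lt_of_lt_of_eq this ?_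
    ring
  · simp only [h, if_false]
    have h3 := final_ineq t (not_le.1 h) h1
    have : 0 < Real.exp (-(4 * t - 2) * η₀) * ((1-t) * (t^3*(2+t) - (3*t-2)^2*(12-20*t+9*t^2))) := by positivity
    refine lt_of_lt_of_eq this ?_
    ring
end

section
/- Let g₅(t) = 4t − 4t³ on [0,1] and let η₀ be the unique real number with ∫₀¹ (4t−2)e^{−(4t−2)η₀} g₅(t) dt = 0. Let Γ = {(t,s,r) : 0<t<1, −1+t+s−2r>0, ((0<s<1 and s+t>1 and r>1−t) or (1<s<1+t and r>s−t)), 1−t+2s−2r>0}, Δ_A = {(t,s,r) : 0<t<1, 0<s<1, ((s<t and r>0) or (s>t and r>s−t)), ((s+t<1 and r<s) or (s+t>1 and r<1−t))}, Δ_{AA} = {(t,s,r,u) : (t,s,r) ∈ Δ_A, 1−t+2s−2r>0, 0<u<r} ∪ {(t,s,r,u) : (t,s,r) ∈ Γ, −1+t+r<u<r}, and Δ_{BB} = {(t,s,r,u) : (t,s,r) ∈ Γ, 0<u<−1+t+r}. Then 12·(∫_{Δ_{AA}} e^{−(4t−2)η₀}·2(r−u)(1−t+2s−3r−u) + ∫_{Δ_{BB}}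 e^{−(4t−2)η₀}·4(1−t)(1−t+s−2r)) < (1/4)·∫₀¹ e^{−(4t−2)η₀} g₅(t) dt. -/
open MeasureTheory intervalIntegral

/-- Region `Γ` in ℝ³, coordinates `(t, s, r)`. -/
def GammaR : Set (ℝ × ℝ × ℝ) :=
  {p | 0 < p.1 ∧ p.1 < 1 ∧ -1 + p.1 + p.2.1 - 2 * p.2.2 > 0 ∧
       ((0 < p.2.1 ∧ p.2.1 < 1 ∧ p.2.1 + p.1 > 1 ∧ p.2.2 > 1 - p.1) ∨
        (1 < p.2.1 ∧ p.2.1 < 1 + p.1 ∧ p.2.2 > p.2.1 - p.1)) ∧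
       1 - p.1 + 2 * p.2.1 - 2 * p.2.2 > 0}

/-- Region `Δ_{AA}` in ℝ⁴, coordinates `(t, s, r, u)`. -/
def DeltaAA : Set (ℝ × ℝ × ℝ × ℝ) :=
  {p | ((p.1, p.2.1, p.2.2.1) ∈ DeltaA ∧
          1 - p.1 + 2 * p.2.1 - 2 * p.2.2.1 > 0 ∧ 0 < p.2.2.2 ∧ p.2.2.2 < p.2.2.1) ∨
       ((p.1, p.2.1, p.2.2.1) ∈ GammaR ∧
          -1 + p.1 + p.2.2.1 < p.2.2.2 ∧ p.2.2.2 < p.2.2.1)}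

/-- Region `Δ_{BB}` in ℝ⁴, coordinates `(t, s, r, u)`. -/
def DeltaBB : Set (ℝ × ℝ × ℝ × ℝ) :=
  {p | (p.1, p.2.1, p.2.2.1) ∈ GammaR ∧ 0 < p.2.2.2 ∧ p.2.2.2 < -1 + p.1 + p.2.2.1}

open Set in
lemma peel {β : Type*} [MetricSpace β] [ProperSpace β] [MeasureSpace β] [BorelSpace β]
    [SecondCountableTopology β]
    [SFinite (volume : Measure β)] [IsFiniteMeasureOnCompacts (volume : Measure β)]
    (S : Set (ℝ × β)) (hS : MeasurableSet S) (hb : Bornology.IsBounded S)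
    (f : ℝ × β → ℝ) (hf : Continuous f) :
    Integrable (fun t : ℝ => ∫ q in {q | (t, q) ∈ S}, f (t, q)) ∧
    ∫ p in S, f p = ∫ t : ℝ, ∫ q in {q | (t, q) ∈ S}, f (t, q) := by
  have hi : IntegrableOn f S := by
    have : IntegrableOn f (closure S) := 
      hf.continuousOn.integrableOn_compact hb.isCompact_closure
    exact this.mono_set subset_closure
  have hi2 : Integrable (S.indicator f) ((volume : Measure ℝ).prod (volume : Measure β)) :=
    (integrable_indicator_iff hS).2 hi
  have key : ∀ t : ℝ, ∫ q, S.indicator f (t, q) = ∫ q in {q | (t, q) ∈ S}, f (t, q) := by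
    intro t
    have hm : MeasurableSet {q | (t, q) ∈ S} := measurable_prodMk_left hS
    rw [← MeasureTheory.integral_indicator hm]
    congr 1
  constructor
  · have := hi2.integral_prod_left
    simpa only [key] using this
  · rw [← MeasureTheory.integral_indicator hS]
    have := integral_prod _ hi2
    simp only [key] at this
    exact this

lemma slice_meas {β : Type*} [MeasurableSpace β] {S : Set (ℝ × β)} (hS : MeasurableSet S) (t : ℝ) :
    MeasurableSet {q | (t, q) ∈ S} := measurable_prodMk_left hS

lemma slice_bdd {β : Type*} [PseudoMetricSpace β] {S : Set (ℝ × β)} (hS : Bornology.IsBounded S)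
    (t : ℝ) : Bornology.IsBounded {q | (t, q) ∈ S} :=
  hS.image_snd.subset (fun q hq => ⟨(t, q), hq, rfl⟩)

lemma ioo_poly (a b : ℝ) (hab : a ≤ b) (f : ℝ → ℝ) (c0 c1 c2 c3 c4 : ℝ)
    (h : ∀ x, a < x → x < b → f x = c0 + c1 * x + c2 * x ^ 2 + c3 * x ^ 3 + c4 * x ^ 4) :
    ∫ x in Set.Ioo a b, f x = c0 * (b - a) + c1 * (b ^ 2 - a ^ 2) / 2 + c2 * (b ^ 3 - a ^ 3) / 3
      + c3 * (b ^ 4 - a ^ 4) / 4 + c4 * (b ^ 5 - a ^ 5) / 5 := by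
  rw [setIntegral_congr_fun measurableSet_Ioo (fun x hx => h x hx.1 hx.2),
    ← integral_Ioc_eq_integral_Ioo, ← intervalIntegral.integral_of_le hab]
  rw [intervalIntegral.integral_eq_sub_of_hasDerivAt 
    (f := fun x => c0 * x + c1 * x ^ 2 / 2 + c2 * x ^ 3 / 3 + c3 * x ^ 4 / 4 + c4 * x ^ 5 / 5)]
  · ring
  · intro x _
    have := ((((hasDerivAt_id x).const_mul c0).add (((hasDerivAt_pow 2 x).const_mul c1).div_const 2)).add
      (((hasDerivAt_pow 3 x).const_mul c2).div_const 3)).add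
      (((hasDerivAt_pow 4 x).const_mul c3).div_const 4) |>.add
      (((hasDerivAt_pow 5 x).const_mul c4).div_const 5)
    exact this.congr_deriv (by push_cast; ring)
  · exact (by fun_prop : Continuous _).intervalIntegrable _ _

lemma split3 (K : ℝ → ℝ) (hK : Integrable K) (x0 x1 x2 x3 : ℝ) (h1 : x0 ≤ x1) (h2 : x1 ≤ x2)
    (h3 : x2 ≤ x3) (h0 : ∀ x, x ∉ Set.Ioo x0 x3 → K x = 0) :
    ∫ x, K x = (∫ x in Set.Ioo x0 x1, K x) + (∫ x in Set.Ioo x1 x2, K x)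
      + ∫ x in Set.Ioo x2 x3, K x := by
  rw [← setIntegral_eq_integral_of_forall_compl_eq_zero h0]
  simp only [← integral_Ioc_eq_integral_Ioo]
  rw [← intervalIntegral.integral_of_le h1, ← intervalIntegral.integral_of_le h2, 
    ← intervalIntegral.integral_of_le h3, ← intervalIntegral.integral_of_le (by linarith),
    intervalIntegral.integral_add_adjacent_intervals, 
    intervalIntegral.integral_add_adjacent_intervals] <;> exact hK.intervalIntegrable

/-- integral over a planar region between two graphs -/
lemma two_d (R : Set (ℝ × ℝ)) (hR : MeasurableSet R) (hb : Bornology.IsBounded R)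
    (f : ℝ × ℝ → ℝ) (hf : Continuous f) (lo hi : ℝ) (a b : ℝ → ℝ)
    (h : ∀ r u, (r, u) ∈ R ↔ (lo < r ∧ r < hi) ∧ a r < u ∧ u < b r) :
    ∫ q in R, f q = ∫ r in Set.Ioo lo hi, ∫ u in Set.Ioo (a r) (b r), f (r, u) := by
  rw [(peel R hR hb f hf).2, ← setIntegral_eq_integral_of_forall_compl_eq_zero (s := Set.Ioo lo hi)]
  · apply setIntegral_congr_fun measurableSet_Ioo
    intro r hr
    have : {q | (r, q) ∈ R} = Set.Ioo (a r) (b r) := by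
      ext u
      simp only [Set.mem_ofPred_eq, h, Set.mem_Ioo]
      exact ⟨fun x => x.2, fun x => ⟨hr, x⟩⟩
    simp only [this]
  · intro r hr
    have : {q | (r, q) ∈ R} = ∅ := by
      ext u
      simp only [Set.mem_ofPred_eq, h, Set.mem_empty_iff_false, iff_false]
      exact fun x => hr x.1
    simp [this]

def S1 : Set (ℝ × ℝ × ℝ × ℝ) :=
  {p | (p.1, p.2.1, p.2.2.1) ∈ DeltaA ∧
          1 - p.1 + 2 * p.2.1 - 2 * p.2.2.1 > 0 ∧ 0 < p.2.2.2 ∧ p.2.2.2 < p.2.2.1}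
def S2 : Set (ℝ × ℝ × ℝ × ℝ) :=
  {p | (p.1, p.2.1, p.2.2.1) ∈ GammaR ∧
          -1 + p.1 + p.2.2.1 < p.2.2.2 ∧ p.2.2.2 < p.2.2.1}

lemma bdd_of (S : Set (ℝ × ℝ × ℝ × ℝ)) (h : ∀ p ∈ S, (0 ≤ p.1 ∧ p.1 ≤ 2) ∧ (0 ≤ p.2.1 ∧ p.2.1 ≤ 2)
    ∧ (0 ≤ p.2.2.1 ∧ p.2.2.1 ≤ 2) ∧ (0 ≤ p.2.2.2 ∧ p.2.2.2 ≤ 2)) : Bornology.IsBounded S := by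
  refine (Metric.isBounded_Icc ((0, 0, 0, 0) : ℝ × ℝ × ℝ × ℝ) (2, 2, 2, 2)).subset ?_
  intro p hp
  obtain ⟨a, b, c, d⟩ := h p hp
  exact ⟨⟨a.1, b.1, c.1, d.1⟩, ⟨a.2, b.2, c.2, d.2⟩⟩

lemma S1_bdd : Bornology.IsBounded S1 := by
  apply bdd_of
  rintro ⟨t, s, r, u⟩ ⟨⟨h1, h2, h3, h4, h5, h6⟩, h7, h8, h9⟩
  simp only at *
  rcases h5 with h5 | h5 <;> rcases h6 with h6 | h6 <;> 
  refine ⟨⟨?_, ?_⟩, ⟨?_, ?_⟩, ⟨?_, ?_⟩, ⟨?_, ?_⟩⟩ <;> linarith [h5.1, h5.2, h6.1, h6.2]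

lemma S2_bdd : Bornology.IsBounded S2 := by
  apply bdd_of
  rintro ⟨t, s, r, u⟩ ⟨⟨h1, h2, h3, h4, h5⟩, h8, h9⟩
  simp only at *
  rcases h4 with h4 | h4 <;>
  refine ⟨⟨?_, ?_⟩, ⟨?_, ?_⟩, ⟨?_, ?_⟩, ⟨?_, ?_⟩⟩ <;> linarith [h4.1, h4.2.1, h4.2.2]

lemma S3_bdd : Bornology.IsBounded DeltaBB := by
  apply bdd_of
  rintro ⟨t, s, r, u⟩ ⟨⟨h1, h2, h3, h4, h5⟩, h8, h9⟩
  simp only at *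
  rcases h4 with h4 | h4 <;>
  refine ⟨⟨?_, ?_⟩, ⟨?_, ?_⟩, ⟨?_, ?_⟩, ⟨?_, ?_⟩⟩ <;> linarith [h4.1, h4.2.1, h4.2.2]

lemma S1_meas : MeasurableSet S1 := by
  unfold S1 DeltaA
  simp only [Set.mem_ofPred_eq]
  apply IsOpen.measurableSet
  simp only [Set.ofPred_and, Set.ofPred_or, gt_iff_lt]
  repeat' first | apply IsOpen.inter | apply IsOpen.union | exact isOpen_lt (by fun_prop) (by fun_prop)

lemma S2_meas : MeasurableSet S2 := by
  unfold S2 GammaR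
  simp only [Set.mem_ofPred_eq]
  apply IsOpen.measurableSet
  simp only [Set.ofPred_and, Set.ofPred_or, gt_iff_lt]
  repeat' first | apply IsOpen.inter | apply IsOpen.union | exact isOpen_lt (by fun_prop) (by fun_prop)

lemma S3_meas : MeasurableSet DeltaBB := by
  unfold DeltaBB GammaR
  simp only [Set.mem_ofPred_eq]
  apply IsOpen.measurableSet
  simp only [Set.ofPred_and, Set.ofPred_or, gt_iff_lt]
  repeat' first | apply IsOpen.inter | apply IsOpen.union | exact isOpen_lt (by fun_prop) (by fun_prop)

lemma AA_eq : DeltaAA = S1 ∪ S2 := rfl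

lemma disj12 : Disjoint S1 S2 := by
  rw [Set.disjoint_left]
  rintro ⟨t, s, r, u⟩ ⟨⟨h1, h2, h3, h4, h5, h6⟩, h7, h8, h9⟩ ⟨⟨g1, g2, g3, g4, g5⟩, g8, g9⟩
  simp only at *
  rcases g4 with g4 | g4
  · rcases h6 with h6 | h6 <;> linarith [h6.1, h6.2, g4.2.2.1, g4.2.2.2]
  · linarith [g4.1]

lemma KA (t s lo hi : ℝ) (h0 : 0 ≤ lo) (h1 : lo ≤ hi) (R : Set (ℝ × ℝ)) (hR : MeasurableSet R)
    (hb : Bornology.IsBounded R)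
    (h : ∀ r u, (r, u) ∈ R ↔ (lo < r ∧ r < hi) ∧ 0 < u ∧ u < r) :
    ∫ q in R, 2 * (q.1 - q.2) * (1 - t + 2 * s - 3 * q.1 - q.2) =
      (1 - t + 2 * s) * (hi ^ 3 - lo ^ 3) / 3 - 10 / 3 * (hi ^ 4 - lo ^ 4) / 4 := by
  rw [two_d R hR hb _ (by fun_prop) lo hi (fun _ => 0) (fun r => r) h]
  rw [ioo_poly lo hi h1 _ 0 0 (1 - t + 2 * s) (-10 / 3) 0]
  · ring
  · intro r hr _
    rw [ioo_poly 0 r (by linarith) _ (2 * r * (1 - t + 2 * s - 3 * r))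
      (-2 * r - 2 * (1 - t + 2 * s - 3 * r)) 2 0 0]
    · ring
    · intro u _ _
      ring

lemma K2 (t s lo hi : ℝ) (ht : t ≤ 1) (h1 : lo ≤ hi) (R : Set (ℝ × ℝ)) (hR : MeasurableSet R)
    (hb : Bornology.IsBounded R)
    (h : ∀ r u, (r, u) ∈ R ↔ (lo < r ∧ r < hi) ∧ -1 + t + r < u ∧ u < r) :
    ∫ q in R, 2 * (q.1 - q.2) * (1 - t + 2 * s - 3 * q.1 - q.2) =
      (1 - t) ^ 2 * ((5 / 3 * (1 - t) + 2 * s) * (hi - lo) - 2 * (hi ^ 2 - lo ^ 2)) := by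
  rw [two_d R hR hb _ (by fun_prop) lo hi (fun r => -1 + t + r) (fun r => r) h]
  rw [ioo_poly lo hi h1 _ ((1 - t) ^ 2 * (5 / 3 * (1 - t) + 2 * s)) (-4 * (1 - t) ^ 2) 0 0 0]
  · ring
  · intro r hr _
    rw [ioo_poly (-1 + t + r) r (by linarith) _ (2 * r * (1 - t + 2 * s - 3 * r))
      (-2 * r - 2 * (1 - t + 2 * s - 3 * r)) 2 0 0]
    · ring
    · intro u _ _
      ring

lemma K3 (t s lo hi : ℝ) (ht : 1 - t ≤ lo) (h1 : lo ≤ hi) (R : Set (ℝ × ℝ)) (hR : MeasurableSet R)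
    (hb : Bornology.IsBounded R)
    (h : ∀ r u, (r, u) ∈ R ↔ (lo < r ∧ r < hi) ∧ 0 < u ∧ u < -1 + t + r) :
    ∫ q in R, 4 * (1 - t) * (1 - t + s - 2 * q.1) =
      -4 * (1 - t) ^ 2 * (1 - t + s) * (hi - lo)
      + 4 * (1 - t) * (3 * (1 - t) + s) * (hi ^ 2 - lo ^ 2) / 2
      - 8 * (1 - t) * (hi ^ 3 - lo ^ 3) / 3 := by
  rw [two_d R hR hb _ (by fun_prop) lo hi (fun _ => 0) (fun r => -1 + t + r) h]
  rw [ioo_poly lo hi h1 _ (-4 * (1 - t) ^ 2 * (1 - t + s)) (4 * (1 - t) * (3 * (1 - t) + s))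
    (-8 * (1 - t)) 0 0]
  · ring
  · intro r hr _
    rw [ioo_poly 0 (-1 + t + r) (by linarith) _ (4 * (1 - t) * (1 - t + s - 2 * r)) 0 0 0 0]
    · ring
    · intro u _ _
      ring

lemma J1 (t : ℝ) (h0 : 0 < t) (h1 : t < 1) :
    ∫ q in {q | (t, q) ∈ S1}, 2 * (q.2.1 - q.2.2) * (1 - t + 2 * q.1 - 3 * q.2.1 - q.2.2)
      = t ^ 2 * (1 - t) ^ 3 / 3 := by
  have hm := slice_meas S1_meas t
  have hb := slice_bdd S1_bdd t
  obtain ⟨hi, he⟩ := peel _ hm hb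
    (fun q => 2 * (q.2.1 - q.2.2) * (1 - t + 2 * q.1 - 3 * q.2.1 - q.2.2)) (by fun_prop)
  rw [he]
  have hz : ∀ s, s ∉ Set.Ioo (0:ℝ) 1 → (∫ q in {q | (s, q) ∈ {q | (t, q) ∈ S1}},
      2 * (q.1 - q.2) * (1 - t + 2 * s - 3 * q.1 - q.2)) = 0 := by
    intro s hs
    have : {q | (s, q) ∈ {q | (t, q) ∈ S1}} = ∅ := by
      ext q
      simp only [Set.mem_ofPred_eq, Set.mem_empty_iff_false, iff_false]
      exact fun x => hs ⟨x.1.2.2.1, x.1.2.2.2.1⟩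
    rw [this]
    simp
  have hk : ∀ s lo hi, 0 ≤ lo → lo ≤ hi → 
      (∀ r u, (t, s, r, u) ∈ S1 ↔ (lo < r ∧ r < hi) ∧ 0 < u ∧ u < r) → _ := 
    fun s lo hi h0 h1 h => KA t s lo hi h0 h1 _ (slice_meas hm s) (slice_bdd hb s) h
  rcases le_total t (1 / 2) with ht | ht
  · rw [split3 _ hi 0 t (1 - t) 1 h0.le (by linarith) (by linarith) hz]
    rw [ioo_poly 0 t h0.le _ 0 0 0 (1/3 - t/3) (-1/6), ioo_poly t (1 - t) (by linarith) _
      (t^3/3 + t^4/2) (-t^2-5/3*t^3) (t+2*t^2) (-4/3*t) 0, ioo_poly (1 - t) 1 (by linarith) _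
      (-1/2+2*t-3*t^2+7/3*t^3) (2/3-2*t+t^2-7/3*t^3) (t+2*t^2) (-1/3-t) (1/6)]
    · ring
    · intro s hs1 hs2
      rw [hk s (s - t) (1 - t) (by linarith) (by linarith)]
      · ring
      · intro r u
        simp only [S1, DeltaA, Set.mem_ofPred_eq]
        grind
    · intro s hs1 hs2
      rw [hk s (s - t) s (by linarith) (by linarith)]
      · ring
      · intro r u
        simp only [S1, DeltaA, Set.mem_ofPred_eq]
        grind
    · intro s hs1 hs2
      rw [hk s 0 s (by linarith) (by linarith)]
      · ring
      · intro r u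
        simp only [S1, DeltaA, Set.mem_ofPred_eq]
        grind
  · rw [split3 _ hi 0 (1 - t) t 1 (by linarith) (by linarith) (by linarith) hz]
    rw [ioo_poly 0 (1 - t) (by linarith) _ 0 0 0 (1/3 - t/3) (-1/6),
      ioo_poly (1 - t) t (by linarith) _
      (-1/2 + 2*t-3*t^2+2*t^3-t^4/2) (2/3-2*t+2*t^2-2/3*t^3) 0 0 0, ioo_poly t 1 (by linarith) _
      (-1/2+2*t-3*t^2+7/3*t^3) (2/3-2*t+t^2-7/3*t^3) (t+2*t^2) (-1/3-t) (1/6)]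
    · ring
    · intro s hs1 hs2
      rw [hk s (s - t) (1 - t) (by linarith) (by linarith)]
      · ring
      · intro r u
        simp only [S1, DeltaA, Set.mem_ofPred_eq]
        grind
    · intro s hs1 hs2
      rw [hk s 0 (1 - t) (by linarith) (by linarith)]
      · ring
      · intro r u
        simp only [S1, DeltaA, Set.mem_ofPred_eq]
        grind
    · intro s hs1 hs2
      rw [hk s 0 s (by linarith) (by linarith)]
      · ring
      · intro r u
        simp only [S1, DeltaA, Set.mem_ofPred_eq]
        grind

lemma GammaR_t {t s r : ℝ} (h : (t, s, r) ∈ GammaR) : 2 / 3 < t ∧ 3 - 3 * t < s ∧ s < 3 * t - 1 := by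
  obtain ⟨h1, h2, h3, h4, h5⟩ := h
  simp only at *
  rcases h4 with h4 | h4 <;> refine ⟨?_, ?_, ?_⟩ <;> linarith [h4.1, h4.2.1, h4.2.2]

lemma GammaR_lo {t s r : ℝ} (h0 : 2 / 3 < t) (h1 : t < 1) (hs : 3 - 3 * t < s) (hs1 : s < 1) :
    (t, s, r) ∈ GammaR ↔ 1 - t < r ∧ r < (s + t - 1) / 2 := by
  simp only [GammaR, Set.mem_ofPred_eq]
  grind

lemma GammaR_hi {t s r : ℝ} (h0 : 2 / 3 < t) (h1 : t < 1) (hs : 1 < s) (hs1 : s < 3 * t - 1) :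
    (t, s, r) ∈ GammaR ↔ s - t < r ∧ r < (s + t - 1) / 2 := by
  simp only [GammaR, Set.mem_ofPred_eq]
  grind

lemma J2 (t : ℝ) (h0 : 2 / 3 < t) (h1 : t < 1) :
    ∫ q in {q | (t, q) ∈ S2}, 2 * (q.2.1 - q.2.2) * (1 - t + 2 * q.1 - 3 * q.2.1 - q.2.2)
      = 14/3 - 80/3*t + 359/6*t^2 - 395/6*t^3 + 71/2*t^4 - 15/2*t^5 := by
  have hm := slice_meas S2_meas t
  have hb := slice_bdd S2_bdd t
  obtain ⟨hi, he⟩ := peel _ hm hb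
    (fun q => 2 * (q.2.1 - q.2.2) * (1 - t + 2 * q.1 - 3 * q.2.1 - q.2.2)) (by fun_prop)
  rw [he]
  have hz : ∀ s, s ∉ Set.Ioo (3 - 3 * t) (3 * t - 1) → (∫ q in {q | (s, q) ∈ {q | (t, q) ∈ S2}},
      2 * (q.1 - q.2) * (1 - t + 2 * s - 3 * q.1 - q.2)) = 0 := by
    intro s hs
    have : {q | (s, q) ∈ {q | (t, q) ∈ S2}} = ∅ := by
      ext q
      simp only [Set.mem_ofPred_eq, Set.mem_empty_iff_false, iff_false]
      exact fun x => hs (GammaR_t x.1).2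
    rw [this]
    simp
  have hk : ∀ s lo hi, lo ≤ hi → 
      (∀ r u, (t, s, r, u) ∈ S2 ↔ (lo < r ∧ r < hi) ∧ -1 + t + r < u ∧ u < r) → _ := 
    fun s lo hi h2 h => K2 t s lo hi h1.le h2 _ (slice_meas hm s) (slice_bdd hb s) h
  rw [split3 _ hi (3 - 3 * t) 1 1 (3 * t - 1) (by linarith) (by linarith) (by linarith) hz]
  rw [ioo_poly (3 - 3 * t) 1 (by linarith) _ (-(1 - t) ^ 4) (-7/6 + 7/2*t - 7/2*t^2 + 7/6*t^3)
      ((1 - t) ^ 2 / 2) 0 0, 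
    ioo_poly 1 (3 * t - 1) (by linarith) _ (-4/3 + 7*t -11*t^2 + 19/3*t^3 - t^4) 
      (-5/6 + 1/2*t + 3/2*t^2 - 7/6*t^3) ((1 - t) ^ 2 / 2) 0 0]
  · simp only [Set.Ioo_self, Measure.restrict_empty, integral_zero_measure]
    ring
  · intro s hs1 hs2
    rw [hk s (s - t) ((s + t - 1) / 2) (by linarith)]
    · ring
    · intro r u
      simp only [S2, Set.mem_ofPred_eq, GammaR_hi h0 h1 hs1 hs2]
  · intro s hs1 hs2
    rw [hk s (1 - t) ((s + t - 1) / 2) (by linarith)]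
    · ring
    · intro r u
      simp only [S2, Set.mem_ofPred_eq, GammaR_lo h0 h1 hs1 hs2]

lemma J3 (t : ℝ) (h0 : 2 / 3 < t) (h1 : t < 1) :
    ∫ q in {q | (t, q) ∈ DeltaBB}, 4 * (1 - t) * (1 - t + q.1 - 2 * q.2.1)
      = -8 + 152/3*t - 380/3*t^2 + 156*t^3 - 189/2*t^4 + 45/2*t^5 := by
  have hm := slice_meas S3_meas t
  have hb := slice_bdd S3_bdd t
  obtain ⟨hi, he⟩ := peel _ hm hb
    (fun q => 4 * (1 - t) * (1 - t + q.1 - 2 * q.2.1)) (by fun_prop)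
  rw [he]
  have hz : ∀ s, s ∉ Set.Ioo (3 - 3 * t) (3 * t - 1) →
      (∫ q in {q | (s, q) ∈ {q | (t, q) ∈ DeltaBB}},
      4 * (1 - t) * (1 - t + s - 2 * q.1)) = 0 := by
    intro s hs
    have : {q | (s, q) ∈ {q | (t, q) ∈ DeltaBB}} = ∅ := by
      ext q
      simp only [Set.mem_ofPred_eq, Set.mem_empty_iff_false, iff_false]
      exact fun x => hs (GammaR_t x.1).2
    rw [this]
    simp
  have hk : ∀ s lo hi, 1 - t ≤ lo → lo ≤ hi → 
      (∀ r u, (t, s, r, u) ∈ DeltaBB ↔ (lo < r ∧ r < hi) ∧ 0 < u ∧ u < -1 + t + r) → _ := 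
    fun s lo hi h1 h2 h => K3 t s lo hi h1 h2 _ (slice_meas hm s) (slice_bdd hb s) h
  rw [split3 _ hi (3 - 3 * t) 1 1 (3 * t - 1) (by linarith) (by linarith) (by linarith) hz]
  rw [ioo_poly (3 - 3 * t) 1 (by linarith) _ (9/2 * (1 - t) ^ 4) (-3/2 * (1 - t) ^ 3)
      (-(1 - t) ^ 2 / 2) ((1 - t) / 6) 0, 
    ioo_poly 1 (3 * t - 1) (by linarith) _ (23/6 - 58/3*t + 29*t^2 - 18*t^3 + 9/2*t^4) 
      (1/2 + 13/2*t - 17/2*t^2 + 3/2*t^3) (-5/2 + t + 3/2*t^2) (5/6 - 5/6*t) 0]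
  · simp only [Set.Ioo_self, Measure.restrict_empty, integral_zero_measure]
    ring
  · intro s hs1 hs2
    rw [hk s (s - t) ((s + t - 1) / 2) (by linarith) (by linarith)]
    · ring
    · intro r u
      simp only [DeltaBB, Set.mem_ofPred_eq, GammaR_hi h0 h1 hs1 hs2]
  · intro s hs1 hs2
    rw [hk s (1 - t) ((s + t - 1) / 2) (by linarith) (by linarith)]
    · ring
    · intro r u
      simp only [DeltaBB, Set.mem_ofPred_eq, GammaR_lo h0 h1 hs1 hs2]

lemma J2z (t : ℝ) (h0 : t ≤ 2 / 3) : {q | (t, q) ∈ S2} = ∅ := by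
  ext q
  simp only [Set.mem_ofPred_eq, Set.mem_empty_iff_false, iff_false]
  exact fun x => absurd (GammaR_t x.1).1 (by linarith)

lemma J3z (t : ℝ) (h0 : t ≤ 2 / 3) : {q | (t, q) ∈ DeltaBB} = ∅ := by
  ext q
  simp only [Set.mem_ofPred_eq, Set.mem_empty_iff_false, iff_false]
  exact fun x => absurd (GammaR_t x.1).1 (by linarith)

lemma pointwise (t : ℝ) (h0 : 0 < t) (h1 : t < 1) :
    12 * ((∫ q in {q | (t, q) ∈ S1}, 2 * (q.2.1 - q.2.2) * (1 - t + 2 * q.1 - 3 * q.2.1 - q.2.2))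
    + (∫ q in {q | (t, q) ∈ S2}, 2 * (q.2.1 - q.2.2) * (1 - t + 2 * q.1 - 3 * q.2.1 - q.2.2))
    + ∫ q in {q | (t, q) ∈ DeltaBB}, 4 * (1 - t) * (1 - t + q.1 - 2 * q.2.1))
     < 1 / 4 * gFive t := by
  rw [J1 t h0 h1]
  unfold gFive
  rcases le_or_gt t (2 / 3) with h | h
  · rw [J2z t h, J3z t h]
    simp only [Measure.restrict_empty, integral_zero_measure]
    have : 0 < t * (1 - t) * (1 + t - 4 * t * (1 - t) ^ 2) := by
      apply mul_pos (mul_pos h0 (by linarith))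
      nlinarith [mul_pos h0 (sub_pos.2 h1), sq_nonneg (1 - 2 * t), sq_nonneg t]
    nlinarith
  · rw [J2 t h h1, J3 t h h1]
    obtain ⟨x, rfl⟩ : ∃ x, t = 1 - x := ⟨1 - t, by ring⟩
    have hx : 0 < x := by linarith
    have hx3 : x < 1 / 3 := by linarith
    have : 0 < x ^ 2 * (1 + 47 * x - 184 * x ^ 2 + 176 * x ^ 3) := by
      apply mul_pos (by positivity)
      have : 0 < x * (47 - 184 * x + 176 * x ^ 2) + 1 := by
        nlinarith [mul_pos hx (sub_pos.2 hx3), mul_nonneg hx.le (sq_nonneg (x - 23/44))]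
      linarith
    nlinarith

/-- The weighted estimate `S^g(W^{E_C}_{••••}; C̃) < 1/4` for the soliton candidate `η₀`
of `M₅` (the root of the displayed constraint). -/
theorem Sg_WEC_Ctilde_lt (η₀ : ℝ)
    (hη : (∫ t in (0:ℝ)..1, (4 * t - 2) * Real.exp (-(4 * t - 2) * η₀) * gFive t) = 0) :
    12 * ((∫ p in DeltaAA,
             Real.exp (-(4 * p.1 - 2) * η₀) *
               (2 * (p.2.2.1 - p.2.2.2) *
                 (1 - p.1 + 2 * p.2.1 - 3 * p.2.2.1 - p.2.2.2))) +
          (∫ p in DeltaBB,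
             Real.exp (-(4 * p.1 - 2) * η₀) *
               (4 * (1 - p.1) * (1 - p.1 + p.2.1 - 2 * p.2.2.1))))
      < 1 / 4 * ∫ t in (0:ℝ)..1, Real.exp (-(4 * t - 2) * η₀) * gFive t := by
  clear hη
  obtain ⟨i1, e1⟩ := peel S1 S1_meas S1_bdd (fun p => Real.exp (-(4 * p.1 - 2) * η₀) *
               (2 * (p.2.2.1 - p.2.2.2) *
                 (1 - p.1 + 2 * p.2.1 - 3 * p.2.2.1 - p.2.2.2))) (by fun_prop)
  obtain ⟨i2, e2⟩ := peel S2 S2_meas S2_bdd (fun p => Real.exp (-(4 * p.1 - 2) * η₀) *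
               (2 * (p.2.2.1 - p.2.2.2) *
                 (1 - p.1 + 2 * p.2.1 - 3 * p.2.2.1 - p.2.2.2))) (by fun_prop)
  obtain ⟨i3, e3⟩ := peel DeltaBB S3_meas S3_bdd (fun p => Real.exp (-(4 * p.1 - 2) * η₀) *
               (4 * (1 - p.1) * (1 - p.1 + p.2.1 - 2 * p.2.2.1))) (by fun_prop)
  have hint : ∀ S : Set (ℝ × ℝ × ℝ × ℝ), Bornology.IsBounded S →
      IntegrableOn (fun p : ℝ × ℝ × ℝ × ℝ => Real.exp (-(4 * p.1 - 2) * η₀) *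
               (2 * (p.2.2.1 - p.2.2.2) *
                 (1 - p.1 + 2 * p.2.1 - 3 * p.2.2.1 - p.2.2.2))) S := by
    intro S hS
    have hc : Continuous (fun p : ℝ × ℝ × ℝ × ℝ => Real.exp (-(4 * p.1 - 2) * η₀) *
               (2 * (p.2.2.1 - p.2.2.2) *
                 (1 - p.1 + 2 * p.2.1 - 3 * p.2.2.1 - p.2.2.2))) := by fun_prop
    exact (hc.continuousOn.integrableOn_compact hS.isCompact_closure).mono_set subset_closure
  rw [AA_eq, setIntegral_union disj12 S2_meas (hint _ S1_bdd) (hint _ S2_bdd), e1, e2, e3]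
  have i12 := i1.add i2
  simp only [Pi.add_def] at i12
  rw [← MeasureTheory.integral_add i1 i2, ← MeasureTheory.integral_add i12 i3]
  set H : ℝ → ℝ := fun t => ((∫ q in {q | (t, q) ∈ S1}, Real.exp (-(4 * t - 2) * η₀) *
      (2 * (q.2.1 - q.2.2) * (1 - t + 2 * q.1 - 3 * q.2.1 - q.2.2)))
    + (∫ q in {q | (t, q) ∈ S2}, Real.exp (-(4 * t - 2) * η₀) *
      (2 * (q.2.1 - q.2.2) * (1 - t + 2 * q.1 - 3 * q.2.1 - q.2.2))))
    + ∫ q in {q | (t, q) ∈ DeltaBB}, Real.exp (-(4 * t - 2) * η₀) *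
      (4 * (1 - t) * (1 - t + q.1 - 2 * q.2.1)) with hH
  have hHi : Integrable H := (i1.add i2).add i3
  change 12 * ∫ t, H t < _
  have hz : ∀ t, t ∉ Set.Ioc (0:ℝ) 1 → H t = 0 := by
    intro t ht
    have a1 : {q | (t, q) ∈ S1} = ∅ := by
      ext q
      simp only [Set.mem_ofPred_eq, Set.mem_empty_iff_false, iff_false]
      exact fun x => ht ⟨x.1.1, x.1.2.1.le⟩
    have a2 : {q | (t, q) ∈ S2} = ∅ := by
      ext q
      simp only [Set.mem_ofPred_eq, Set.mem_empty_iff_false, iff_false]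
      exact fun x => ht ⟨x.1.1, x.1.2.1.le⟩
    have a3 : {q | (t, q) ∈ DeltaBB} = ∅ := by
      ext q
      simp only [Set.mem_ofPred_eq, Set.mem_empty_iff_false, iff_false]
      exact fun x => ht ⟨x.1.1, x.1.2.1.le⟩
    simp only [hH, a1, a2, a3, Measure.restrict_empty, integral_zero_measure, add_zero]
  rw [← setIntegral_eq_integral_of_forall_compl_eq_zero hz,
    ← intervalIntegral.integral_of_le zero_le_one, ← sub_pos, 
    ← intervalIntegral.integral_const_mul, ← intervalIntegral.integral_const_mul]
  have j1 : IntervalIntegrable (fun t => 12 * H t) volume 0 1 :=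
    (hHi.const_mul 12).intervalIntegrable
  have j2 : IntervalIntegrable (fun t => 1 / 4 * (Real.exp (-(4 * t - 2) * η₀) * gFive t))
      volume 0 1 := by
    apply Continuous.intervalIntegrable
    unfold gFive
    fun_prop
  rw [← intervalIntegral.integral_sub j2 j1]
  apply intervalIntegral.intervalIntegral_pos_of_pos_on (j2.sub j1) _ zero_lt_one
  intro t ht
  have hp := pointwise t ht.1 ht.2
  have he := Real.exp_pos (-(4 * t - 2) * η₀)
  simp only [MeasureTheory.integral_const_mul] at hp
  simp only [hH, MeasureTheory.integral_const_mul]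
  have := mul_pos he (sub_pos.2 hp)
  linarith
end
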